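/- Radius preservation: let x_1,…,x_n ∈ ℝ^d, let x_B ∈ ℝ^d and B > 0 satisfy ‖x_i − x_B‖₂ ≤ B for all i (x_B is the center and B the radius of an enclosing ball of the points). Let X_B ∈ ℝ^{(n+1)×d} be the matrix whose first n rows are x_1^T,…,x_n^T and whose last row is x_B^T, with rank ρ_B and compact singular value decomposition X_B = U_B Σ_B V_B^T. Let ε ∈ (0,1) and let R ∈ ℝ^{d×r} satisfy ‖I_{ρ_B} − V_B^T R R^T V_B‖₂ ≤ ε. Then for every i = 1,…,n, ‖R^T x_i − R^T x_B‖₂² ≤ (1 + ε)·B²; consequently, the minimum enclosing ball radius B̃ of the points R^T x_1,…,R^T x_n (the infimum over centers c ∈ ℝ^r of max_i ‖R^T x_i − c‖₂) satisfies B̃² ≤ (1 + ε)·B². -/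

import Mathlib

open Matrix

/-- Euclidean norm of a vector in ℝ^n. -/
noncomputable def euclNorm {n : ℕ} (x : Fin n → ℝ) : ℝ := Real.sqrt (∑ i, x i ^ 2)

/-- Spectral norm (ℓ₂ operator norm) of a real matrix: the supremum of `‖A x‖₂`
over unit vectors `x`. -/
noncomputable def specNorm {m n : ℕ} (A : Matrix (Fin m) (Fin n) ℝ) : ℝ :=
  sSup {c : ℝ | ∃ x : Fin n → ℝ, euclNorm x = 1 ∧ c = euclNorm (A.mulVec x)}


theorem rp_norm {n : ℕ} (x : Fin n → ℝ) : euclNorm x = ‖(WithLp.toLp 2 x : EuclideanSpace ℝ (Fin n))‖ := by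
  simp [euclNorm, EuclideanSpace.norm_eq]

theorem rp_sq {n : ℕ} (x : Fin n → ℝ) : euclNorm x ^ 2 = x ⬝ᵥ x := by
  unfold euclNorm
  rw [Real.sq_sqrt (Finset.sum_nonneg fun i _ => sq_nonneg _)]
  simp [dotProduct, sq]

theorem rp_nonneg {n : ℕ} (x : Fin n → ℝ) : 0 ≤ euclNorm x := Real.sqrt_nonneg _

theorem rp_smul {n : ℕ} (a : ℝ) (x : Fin n → ℝ) : euclNorm (a • x) = |a| * euclNorm x := by
  rw [rp_norm, rp_norm, WithLp.toLp_smul, norm_smul, Real.norm_eq_abs]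

theorem rp_cs {n : ℕ} (x y : Fin n → ℝ) : |x ⬝ᵥ y| ≤ euclNorm x * euclNorm y := by
  have h := abs_real_inner_le_norm (WithLp.toLp 2 x : EuclideanSpace ℝ (Fin n)) (WithLp.toLp 2 y)
  rw [← rp_norm, ← rp_norm] at h
  simpa [EuclideanSpace.inner_eq_star_dotProduct, dotProduct_comm] using h

theorem rp_spec {n : ℕ} (A : Matrix (Fin n) (Fin n) ℝ) (w : Fin n → ℝ) :
    euclNorm (A.mulVec w) ≤ specNorm A * euclNorm w := by
  by_cases hw : euclNorm w = 0
  · have h0 : w = 0 := by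
      rw [rp_norm, norm_eq_zero] at hw
      simpa using hw
    subst h0
    simp [euclNorm]
  have hpos : 0 < euclNorm w := lt_of_le_of_ne (rp_nonneg w) (Ne.symm hw)
  have hb : BddAbove {c : ℝ | ∃ x : Fin n → ℝ, euclNorm x = 1 ∧ c = euclNorm (A.mulVec x)} := by
    refine ⟨‖Matrix.toEuclideanCLM (𝕜 := ℝ) A‖, ?_⟩
    rintro c ⟨x, hx, rfl⟩
    have h := (Matrix.toEuclideanCLM (𝕜 := ℝ) A).le_opNorm (WithLp.toLp 2 x)
    rw [← rp_norm x, hx, mul_one, Matrix.toEuclideanCLM_toLp, ← rp_norm] at h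
    exact h
  have h := le_csSup hb ⟨(euclNorm w)⁻¹ • w, by
    rw [rp_smul, abs_of_pos (inv_pos.mpr hpos), inv_mul_cancel₀ hw], rfl⟩
  rw [Matrix.mulVec_smul, rp_smul, abs_of_pos (inv_pos.mpr hpos)] at h
  change _ ≤ specNorm A at h
  rw [inv_mul_le_iff₀ hpos] at h
  linarith

/-- **Theorem 5 (radius preservation).** Let `x_1,…,x_n ∈ ℝ^d` be enclosed in the
ball of center `x_B` and radius `B > 0`, let `X_B ∈ ℝ^{(n+1)×d}` be the matrix whose
first `n` rows are the `x_i` and whose last row is `x_B`, with compact SVD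
`X_B = U_B Σ_B V_Bᵀ` of rank `ρ_B`.  If `R ∈ ℝ^{d×r}` satisfies
`‖I_{ρ_B} − V_BᵀRRᵀV_B‖₂ ≤ ε` with `ε ∈ (0,1)`, then every sampled point satisfies
`‖Rᵀx_i − Rᵀx_B‖₂² ≤ (1+ε)B²`, and the minimum enclosing ball radius `B̃` of the
sampled points satisfies `B̃² ≤ (1+ε)B²`. -/
theorem radius_preservation
    (n d r ρB : ℕ)
    (x : Fin n → Fin d → ℝ) (xB : Fin d → ℝ) (B : ℝ) (hB : 0 < B)
    (henc : ∀ i, euclNorm (x i - xB) ≤ B)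
    (XB : Matrix (Fin (n + 1)) (Fin d) ℝ)
    (hXB : XB = Matrix.of (Fin.snoc x xB))
    (hrank : XB.rank = ρB)
    (UB : Matrix (Fin (n + 1)) (Fin ρB) ℝ) (SB : Matrix (Fin ρB) (Fin ρB) ℝ)
    (VB : Matrix (Fin d) (Fin ρB) ℝ)
    (hU : UBᵀ * UB = 1) (hV : VBᵀ * VB = 1)
    (hS : ∃ σ : Fin ρB → ℝ, (∀ i, 0 < σ i) ∧ SB = Matrix.diagonal σ)
    (hSVD : XB = UB * SB * VBᵀ)
    (ε : ℝ) (hε : ε ∈ Set.Ioo (0 : ℝ) 1)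
    (R : Matrix (Fin d) (Fin r) ℝ)
    (hE : specNorm ((1 : Matrix (Fin ρB) (Fin ρB) ℝ) - VBᵀ * R * Rᵀ * VB) ≤ ε) :
    (∀ i, euclNorm (Rᵀ.mulVec (x i) - Rᵀ.mulVec xB) ^ 2 ≤ (1 + ε) * B ^ 2) ∧
    (⨅ c : Fin r → ℝ, ⨆ i : Fin n, euclNorm (Rᵀ.mulVec (x i) - c)) ^ 2
      ≤ (1 + ε) * B ^ 2 := by
  have key : ∀ i, euclNorm (Rᵀ.mulVec (x i) - Rᵀ.mulVec xB) ^ 2 ≤ (1 + ε) * B ^ 2 := by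
    intro i
    obtain ⟨w, hw⟩ : ∃ w : Fin ρB → ℝ, x i - xB = VB.mulVec w := by
      refine ⟨(UB * SB) i.castSucc - (UB * SB) (Fin.last n), ?_⟩
      have hr : ∀ k, XB k = VB.mulVec ((UB * SB) k) := by
        intro k
        rw [hSVD]
        ext j
        simp [Matrix.mul_apply, Matrix.mulVec, dotProduct, mul_comm]
      rw [Matrix.mulVec_sub, ← hr, ← hr, hXB]
      ext j
      simp
    have hn : euclNorm (x i - xB) ^ 2 = euclNorm w ^ 2 := by
      rw [rp_sq, rp_sq, hw, Matrix.dotProduct_mulVec, Matrix.vecMul_mulVec,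
        hV, Matrix.vecMul_one]
    have hle : euclNorm w ^ 2 ≤ B ^ 2 := by
      rw [← hn]
      exact pow_le_pow_left₀ (rp_nonneg _) (henc i) 2
    have hR : euclNorm (Rᵀ.mulVec (x i) - Rᵀ.mulVec xB) ^ 2
        = w ⬝ᵥ w - w ⬝ᵥ ((1 - VBᵀ * R * Rᵀ * VB).mulVec w) := by
      rw [← Matrix.mulVec_sub, hw, rp_sq, Matrix.sub_mulVec, Matrix.one_mulVec, dotProduct_sub,
        sub_sub_cancel, Matrix.mulVec_mulVec, ← Matrix.vecMul_transpose (Rᵀ * VB) w,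
        ← Matrix.dotProduct_mulVec, Matrix.vecMul_transpose, Matrix.mulVec_mulVec]
      simp [Matrix.transpose_mul, Matrix.mul_assoc]
    have h1 := rp_cs w ((1 - VBᵀ * R * Rᵀ * VB).mulVec w)
    have h2 := rp_spec (1 - VBᵀ * R * Rᵀ * VB) w
    have h3 := mul_le_mul_of_nonneg_right hE (rp_nonneg w)
    have h4 := mul_le_mul_of_nonneg_left (h2.trans h3) (rp_nonneg w)
    have h5 := neg_abs_le (w ⬝ᵥ ((1 - VBᵀ * R * Rᵀ * VB).mulVec w))
    have h6 := mul_le_mul_of_nonneg_left hle (by linarith [hε.1] : (0 : ℝ) ≤ 1 + ε)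
    rw [hR, ← rp_sq]
    nlinarith
  refine ⟨key, ?_⟩
  have hnn : 0 ≤ (1 + ε) * B ^ 2 := mul_nonneg (by linarith [hε.1]) (sq_nonneg _)
  have h0 : ∀ c : Fin r → ℝ, 0 ≤ ⨆ i : Fin n, euclNorm (Rᵀ.mulVec (x i) - c) :=
    fun c => Real.iSup_nonneg fun i => rp_nonneg _
  have hI : (⨅ c : Fin r → ℝ, ⨆ i : Fin n, euclNorm (Rᵀ.mulVec (x i) - c))
      ≤ Real.sqrt ((1 + ε) * B ^ 2) := by
    refine (ciInf_le ⟨0, ?_⟩ (Rᵀ.mulVec xB)).trans ?_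
    · rintro _ ⟨c, rfl⟩
      exact h0 c
    · exact Real.iSup_le (fun i => Real.le_sqrt_of_sq_le (key i)) (Real.sqrt_nonneg _)
  calc _ ≤ Real.sqrt ((1 + ε) * B ^ 2) ^ 2 := pow_le_pow_left₀ (Real.iInf_nonneg h0) hI 2
    _ = _ := Real.sq_sqrt hnn
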